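/- Assume SSCP and SLS, and let t_l < t'_l < t_r < t'_r in T. Suppose (x̲_l, x̲_r) is the least element of E(t_l,t_r), (y̲_l, y̲_r) is the least element of E(t'_l,t_r), and (z̲_l, z̲_r) is the least element of E(t_l,t'_r) (coordinatewise order). Then π(y̲_l, y̲_r) ≥ π(x̲_l, x̲_r) and π(z̲_l, z̲_r) ≥ π(x̲_l, x̲_r): the equilibrium indirect expected policy associated with the least equilibrium is increasing in each candidate's ideal policy. -/

import Mathlib

/-! An equilibrium `(a, b)` for ideal policies `s < t` satisfies `s ≤ a < b ≤ t`, because the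
candidates' best responses lie between their ideal policy and the opponent's platform.

*Expected policy.* If `(a, b) ≤ (c, d)` are equilibria, possibly for different ideal policies, then
`pol (a, b) ≤ pol (c, d)` (`pol_mono`). When `b ≤ c` this is clear, as `pol (a, b) ≤ b` and
`c ≤ pol (c, d)`. When `c < b`, pass from `(a, b)` to `(c, b)` and then to `(c, d)`. The left
candidate weakly prefers `a` to `c` against `b`; as her utility is concave and decreasing on
`[a, b]`, the same preference holds for the linear utility `x ↦ -x`, i.e.
`pol (a, b) ≤ pol (c, b)`. In the same way, the right candidate's preference for `d` over `b`
against `c` gives `pol (c, b) ≤ pol (c, d)`.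

*Ordering of the equilibria.* SSCP makes every selection of best responses monotone in the
opponent's platform, and SLS makes best responses monotone in the ideal policy. Given an equilibrium
for the higher ideal policies, the composed best-response map for the lower ones therefore maps its
left platform weakly downwards, and a Tarski fixed point argument yields an equilibrium for the
lower ideal policies below the given one (`exists_eq_below`). So the least equilibria are ordered. -/

open Set

/-- The policy space `T = [0,1] ⊆ ℝ`. -/
def T : Set ℝ := Set.Icc 0 1

/-- Hypotheses on the beliefs `F` about the median voter's ideal policy:
continuous, strictly increasing on `T`, with values in `[0,1]` (full support). -/
def Fhyp (F : ℝ → ℝ) : Prop :=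
  ContinuousOn F T ∧ StrictMonoOn F T ∧ ∀ x ∈ T, 0 ≤ F x ∧ F x ≤ 1

/-- The probability that candidate `l` wins given platforms `xl, xr`. -/
noncomputable def P (F : ℝ → ℝ) (xl xr : ℝ) : ℝ :=
  if xl < xr then F ((xl + xr) / 2)
  else if xl = xr then 1 / 2
  else 1 - F ((xl + xr) / 2)

/-- Hypotheses on the payoff `u x t`: jointly continuous on `T × T`, strictly
concave in the platform, and uniquely maximized at the ideal policy. -/
def uhyp (u : ℝ → ℝ → ℝ) : Prop :=
  ContinuousOn (fun p : ℝ × ℝ => u p.1 p.2) (T ×ˢ T) ∧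
  (∀ t ∈ T, StrictConcaveOn ℝ T (fun x => u x t)) ∧
  (∀ t ∈ T, ∀ x ∈ T, x ≠ t → u x t < u t t)

/-- Expected payoff of a candidate with ideal policy `t` given platforms `xl, xr`. -/
noncomputable def U (F : ℝ → ℝ) (u : ℝ → ℝ → ℝ) (t xl xr : ℝ) : ℝ :=
  P F xl xr * u xl t + (1 - P F xl xr) * u xr t

/-- Best-response set of candidate `l` with ideal policy `t` to opponent platform `x`. -/
def brL (F : ℝ → ℝ) (u : ℝ → ℝ → ℝ) (t x : ℝ) : Set ℝ :=
  {y ∈ T | ∀ z ∈ T, U F u t z x ≤ U F u t y x}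

/-- Best-response set of candidate `r` with ideal policy `t` to opponent platform `x`. -/
def brR (F : ℝ → ℝ) (u : ℝ → ℝ → ℝ) (t x : ℝ) : Set ℝ :=
  {y ∈ T | ∀ z ∈ T, U F u t x z ≤ U F u t x y}

/-- The set of Nash equilibria given ideal policies `tl, tr`
(ordered coordinatewise via the product order on `ℝ × ℝ`). -/
def E (F : ℝ → ℝ) (u : ℝ → ℝ → ℝ) (tl tr : ℝ) : Set (ℝ × ℝ) :=
  {p | p.1 ∈ brL F u tl p.2 ∧ p.2 ∈ brR F u tr p.1}

/-- Strict single crossing property (SSCP). -/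
def SSCP (F : ℝ → ℝ) (u : ℝ → ℝ → ℝ) : Prop :=
  ∀ t x x' y y' t' : ℝ, t ∈ T → x ∈ T → x' ∈ T → y ∈ T → y' ∈ T → t' ∈ T →
    t ≤ x → x < x' → x' < y → y < y' → y' ≤ t' →
    (U F u t x' y ≥ U F u t x y → U F u t x' y' > U F u t x y') ∧
    (U F u t' x' y ≥ U F u t' x' y' → U F u t' x y > U F u t' x y')

/-- Strict log supermodularity (SLS). -/
def SLS (u : ℝ → ℝ → ℝ) : Prop :=
  ∀ t t' x x' y : ℝ, t ∈ T → t' ∈ T → x ∈ T → x' ∈ T → y ∈ T →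
    ((t < t' ∧ t' ≤ x ∧ x < x' ∧ x' < y) ∨ (y < x ∧ x < x' ∧ x' ≤ t ∧ t < t')) →
    (u x' t' - u y t') / (u x t' - u y t') > (u x' t - u y t) / (u x t - u y t)

/-- The expected policy function. -/
noncomputable def pol (F : ℝ → ℝ) (xl xr : ℝ) : ℝ :=
  P F xl xr * xl + (1 - P F xl xr) * xr

/-! ### Utility, winning probabilities and payoffs -/

lemma chord {f : ℝ → ℝ} (h : StrictConcaveOn ℝ T f) {x y z : ℝ} (hx : x ∈ T) (hz : z ∈ T)
    (hxy : x < y) (hyz : y < z) : (z - y) * f x + (y - x) * f z < (z - x) * f y := by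
  have := h.slope_anti_adjacent hx hz hxy hyz
  rw [div_lt_div_iff₀ (by linarith) (by linarith)] at this
  nlinarith

lemma u_anti {u : ℝ → ℝ → ℝ} (hu : uhyp u) {t x y : ℝ} (ht : t ∈ T) (hx : x ∈ T) (hy : y ∈ T)
    (htx : t ≤ x) (hxy : x < y) : u y t < u x t := by
  rcases htx.eq_or_lt with rfl | h
  · exact hu.2.2 _ ht _ hy hxy.ne'
  · have h1 := chord (hu.2.1 t ht) ht hy h hxy
    have h2 := hu.2.2 _ ht _ hx h.ne'
    have h3 : (y - x) * u x t < (y - x) * u t t := mul_lt_mul_of_pos_left h2 (by linarith)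
    have h4 : (x - t) * u y t < (x - t) * u x t := by linarith
    exact lt_of_mul_lt_mul_left h4 (by linarith)

lemma u_mono {u : ℝ → ℝ → ℝ} (hu : uhyp u) {t x y : ℝ} (ht : t ∈ T) (hx : x ∈ T) (hy : y ∈ T)
    (hxy : x < y) (hyt : y ≤ t) : u x t < u y t := by
  rcases hyt.eq_or_lt with rfl | h
  · exact hu.2.2 _ ht _ hx hxy.ne
  · have h1 := chord (hu.2.1 t ht) hx ht hxy h
    have h2 := hu.2.2 _ ht _ hy h.ne
    have h3 : (y - x) * u y t < (y - x) * u t t := mul_lt_mul_of_pos_left h2 (by linarith)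
    have h4 : (t - y) * u x t < (t - y) * u y t := by linarith
    exact lt_of_mul_lt_mul_left h4 (by linarith)

lemma mid_mem {x y : ℝ} (hx : x ∈ T) (hy : y ∈ T) : (x + y) / 2 ∈ T :=
  ⟨by linarith [hx.1, hy.1], by linarith [hx.2, hy.2]⟩

lemma F_pos {F : ℝ → ℝ} (hF : Fhyp F) {x y : ℝ} (hx : x ∈ T) (hy : y ∈ T) (h : x ≠ y) :
    0 < F ((x + y) / 2) := by
  have h0 : (0 : ℝ) ∈ T := ⟨le_rfl, zero_le_one⟩
  refine (hF.2.2 0 h0).1.trans_lt (hF.2.1 h0 (mid_mem hx hy) ?_)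
  rcases h.lt_or_gt with h | h <;> linarith [hx.1, hy.1]

lemma F_lt_one {F : ℝ → ℝ} (hF : Fhyp F) {x y : ℝ} (hx : x ∈ T) (hy : y ∈ T) (h : x ≠ y) :
    F ((x + y) / 2) < 1 := by
  have h0 : (1 : ℝ) ∈ T := ⟨zero_le_one, le_rfl⟩
  refine (hF.2.1 (mid_mem hx hy) h0 ?_).trans_le (hF.2.2 1 h0).2
  rcases h.lt_or_gt with h | h <;> linarith [hx.2, hy.2]

lemma U_swap (F : ℝ → ℝ) (u : ℝ → ℝ → ℝ) (t x y : ℝ) : U F u t x y = U F u t y x := by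
  rcases lt_trichotomy x y with h | rfl | h
  · simp only [U, P, h, if_true, h.not_gt, h.ne', if_false, add_comm y x]; ring
  · rfl
  · simp only [U, P, h, if_true, h.not_gt, h.ne', if_false, add_comm y x]; ring

/-- The payoff depends only on the unordered pair of platforms, so the two candidates' best-response
correspondences coincide. -/
lemma brR_eq (F : ℝ → ℝ) (u : ℝ → ℝ → ℝ) (t x : ℝ) : brR F u t x = brL F u t x := by
  simp only [brR, brL, U_swap F u t x]

lemma U_of_lt (F : ℝ → ℝ) (u : ℝ → ℝ → ℝ) (t : ℝ) {x y : ℝ} (h : x < y) :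
    U F u t x y = F ((x + y) / 2) * u x t + (1 - F ((x + y) / 2)) * u y t := by
  simp [U, P, h]

lemma U_self (F : ℝ → ℝ) (u : ℝ → ℝ → ℝ) (t x : ℝ) : U F u t x x = u x t := by
  simp [U, P]; ring

/-- Moving past the opponent, away from the ideal policy, gains nothing. -/
lemma U_le_of_past {F : ℝ → ℝ} {u : ℝ → ℝ → ℝ} (hF : Fhyp F) (hu : uhyp u) {t z y : ℝ}
    (ht : t ∈ T) (hz : z ∈ T) (hy : y ∈ T)
    (h : (t ≤ y ∧ y ≤ z) ∨ (z ≤ y ∧ y ≤ t)) : U F u t z y ≤ u y t := by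
  rcases h with ⟨h1, h2⟩ | ⟨h1, h2⟩
  · rcases h2.eq_or_lt with rfl | h2
    · rw [U_self]
    · rw [U_swap, U_of_lt F u t h2]
      nlinarith [u_anti hu ht hy hz h1 h2, F_lt_one hF hy hz h2.ne]
  · rcases h1.eq_or_lt with rfl | h1
    · rw [U_self]
    · rw [U_of_lt F u t h1]
      nlinarith [u_mono hu ht hz hy h1 h2, F_pos hF hz hy h1.ne]

/-- A platform on the far side of the ideal policy from the opponent is strictly worse than the
ideal policy. -/
lemma U_lt_of_overshoot {F : ℝ → ℝ} {u : ℝ → ℝ → ℝ} (hF : Fhyp F) (hu : uhyp u) {t z y : ℝ}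
    (ht : t ∈ T) (hz : z ∈ T) (hy : y ∈ T)
    (h : (z < t ∧ t < y) ∨ (y < t ∧ t < z)) : U F u t z y < U F u t t y := by
  rcases h with ⟨h1, h2⟩ | ⟨h1, h2⟩
  · rw [U_of_lt F u t (h1.trans h2), U_of_lt F u t h2]
    have hm := hF.2.1 (mid_mem hz hy) (mid_mem ht hy) (by linarith)
    have h3 := hu.2.2 _ ht _ hz h1.ne
    have h4 := hu.2.2 _ ht _ hy h2.ne'
    nlinarith [F_pos hF hz hy (h1.trans h2).ne, mul_pos (sub_pos.2 hm) (sub_pos.2 h4),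
      mul_pos (F_pos hF hz hy (h1.trans h2).ne) (sub_pos.2 h3)]
  · rw [U_swap, U_swap F u t t, U_of_lt F u t (h1.trans h2), U_of_lt F u t h1]
    have hm := hF.2.1 (mid_mem hy ht) (mid_mem hy hz) (by linarith)
    have h3 := hu.2.2 _ ht _ hz h2.ne'
    have h4 := hu.2.2 _ ht _ hy h1.ne
    nlinarith [mul_pos (sub_pos.2 hm) (sub_pos.2 h4),
      mul_pos (sub_pos.2 (F_lt_one hF hy hz (h1.trans h2).ne)) (sub_pos.2 h3)]

/-- The ideal policy itself strictly beats copying the opponent. -/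
lemma U_ideal {F : ℝ → ℝ} {u : ℝ → ℝ → ℝ} (hF : Fhyp F) (hu : uhyp u) {t y : ℝ}
    (ht : t ∈ T) (hy : y ∈ T) (h : t ≠ y) : u y t < U F u t t y := by
  have h4 := hu.2.2 _ ht _ hy h.symm
  rcases h.lt_or_gt with h | h
  · rw [U_of_lt F u t h]
    nlinarith [F_pos hF ht hy h.ne]
  · rw [U_swap, U_of_lt F u t h]
    nlinarith [F_lt_one hF hy ht h.ne]

/-! ### Location and existence of best responses -/

lemma br_gt {F : ℝ → ℝ} {u : ℝ → ℝ → ℝ} (hF : Fhyp F) (hu : uhyp u) {t y a : ℝ}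
    (ht : t ∈ T) (hy : y ∈ T) (h : t < y) (ha : a ∈ brL F u t y) : t ≤ a ∧ a < y := by
  have h1 := ha.2 t ht
  constructor
  · by_contra! hc
    exact (U_lt_of_overshoot hF hu ht ha.1 hy (Or.inl ⟨hc, h⟩)).not_ge h1
  · by_contra! hc
    linarith [U_le_of_past hF hu ht ha.1 hy (Or.inl ⟨h.le, hc⟩), U_ideal hF hu ht hy h.ne]

lemma br_lt {F : ℝ → ℝ} {u : ℝ → ℝ → ℝ} (hF : Fhyp F) (hu : uhyp u) {t y a : ℝ}
    (ht : t ∈ T) (hy : y ∈ T) (h : y < t) (ha : a ∈ brL F u t y) : y < a ∧ a ≤ t := by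
  have h1 := ha.2 t ht
  constructor
  · by_contra! hc
    linarith [U_le_of_past hF hu ht ha.1 hy (Or.inr ⟨hc, h.le⟩), U_ideal hF hu ht hy h.ne']
  · by_contra! hc
    exact (U_lt_of_overshoot hF hu ht ha.1 hy (Or.inr ⟨h, hc⟩)).not_ge h1

lemma br_self {F : ℝ → ℝ} {u : ℝ → ℝ → ℝ} (hF : Fhyp F) (hu : uhyp u) {t a : ℝ}
    (ht : t ∈ T) (ha : a ∈ brL F u t t) : a = t := by
  by_contra hc
  have h1 := ha.2 t ht
  rw [U_self] at h1
  have h2 := hu.2.2 _ ht _ ha.1 hc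
  rcases lt_or_gt_of_ne hc with h | h
  · rw [U_of_lt F u t h] at h1
    nlinarith [F_pos hF ha.1 ht h.ne]
  · rw [U_swap, U_of_lt F u t h] at h1
    nlinarith [F_lt_one hF ht ha.1 h.ne]

lemma E_order {F : ℝ → ℝ} {u : ℝ → ℝ → ℝ} (hF : Fhyp F) (hu : uhyp u) {s t : ℝ} {p : ℝ × ℝ}
    (hs : s ∈ T) (ht : t ∈ T) (hst : s < t) (hp : p ∈ E F u s t) :
    s ≤ p.1 ∧ p.1 < p.2 ∧ p.2 ≤ t := by
  obtain ⟨ha, hb⟩ := hp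
  rw [brR_eq] at hb
  have key : p.1 < t → s ≤ p.1 ∧ p.1 < p.2 ∧ p.2 ≤ t := by
    intro h
    obtain ⟨h1, h2⟩ := br_lt hF hu ht ha.1 h hb
    refine ⟨?_, h1, h2⟩
    rcases lt_trichotomy s p.2 with h3 | h3 | h3
    · exact (br_gt hF hu hs hb.1 h3 ha).1
    · rw [← h3] at ha
      exact (br_self hF hu hs ha).ge
    · exact absurd (br_lt hF hu hs hb.1 h3 ha).1 h1.not_gt
  rcases lt_trichotomy s p.2 with h | h | h
  · have h1 := (br_gt hF hu hs hb.1 h ha).2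
    apply key
    by_contra! hc
    rcases hc.eq_or_lt with hc | hc
    · rw [← hc] at hb
      linarith [br_self hF hu ht hb]
    · linarith [(br_gt hF hu ht ha.1 hc hb).2]
  · rw [← h] at ha
    exact key (by rw [br_self hF hu hs ha]; exact hst)
  · exact key ((br_lt hF hu hs hb.1 h ha).2.trans_lt hst)

lemma cont_aux {F : ℝ → ℝ} {u : ℝ → ℝ → ℝ} (hF : Fhyp F) (hu : uhyp u) {t y : ℝ}
    (ht : t ∈ T) (hy : y ∈ T) :
    ContinuousOn (fun x => F ((x + y) / 2)) T ∧ ContinuousOn (fun x => u x t) T := by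
  constructor
  · exact hF.1.comp (f := fun x => (x + y) / 2) (by fun_prop) fun x hx => mid_mem hx hy
  · exact hu.1.comp (f := fun x => (x, t)) (by fun_prop) fun x hx => ⟨hx, ht⟩

lemma br_nonempty_gt {F : ℝ → ℝ} {u : ℝ → ℝ → ℝ} (hF : Fhyp F) (hu : uhyp u) {t y : ℝ}
    (ht : t ∈ T) (hy : y ∈ T) (h : t < y) : ∃ a, a ∈ brL F u t y := by
  obtain ⟨c1, c2⟩ := cont_aux hF hu ht hy
  have hsub : Icc t y ⊆ T := Icc_subset_Icc ht.1 hy.2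
  -- The payoff is continuous at `x = y` although the winning probability jumps there: at `x = y`
  -- both terms of the formula involve the same policy.
  have hU : ∀ x ∈ Icc t y,
      U F u t x y = F ((x + y) / 2) * u x t + (1 - F ((x + y) / 2)) * u y t := by
    rintro x ⟨-, hx⟩
    rcases hx.eq_or_lt with rfl | hx
    · rw [U_self]; ring
    · exact U_of_lt F u t hx
  have hc : ContinuousOn (fun x => U F u t x y) (Icc t y) :=
    (((c1.mul c2).add ((continuousOn_const.sub c1).mul continuousOn_const)).mono hsub).congr hU
  obtain ⟨a, ha, hmax⟩ := isCompact_Icc.exists_isMaxOn ⟨t, left_mem_Icc.2 h.le⟩ hc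
  have hat : U F u t t y ≤ U F u t a y := hmax (left_mem_Icc.2 h.le)
  refine ⟨a, hsub ha, fun z hz => ?_⟩
  by_cases h1 : z < t
  · exact (U_lt_of_overshoot hF hu ht hz hy (Or.inl ⟨h1, h⟩)).le.trans hat
  by_cases h2 : z ≤ y
  · exact hmax ⟨not_lt.1 h1, h2⟩
  · linarith [U_le_of_past hF hu ht hz hy (Or.inl ⟨h.le, (not_le.1 h2).le⟩),
      U_ideal hF hu ht hy h.ne]

lemma br_nonempty_lt {F : ℝ → ℝ} {u : ℝ → ℝ → ℝ} (hF : Fhyp F) (hu : uhyp u) {t y : ℝ}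
    (ht : t ∈ T) (hy : y ∈ T) (h : y < t) : ∃ a, a ∈ brL F u t y := by
  obtain ⟨c1, c2⟩ := cont_aux hF hu ht hy
  have hsub : Icc y t ⊆ T := Icc_subset_Icc hy.1 ht.2
  have hU : ∀ x ∈ Icc y t,
      U F u t x y = F ((x + y) / 2) * u y t + (1 - F ((x + y) / 2)) * u x t := by
    rintro x ⟨hx, -⟩
    rcases hx.eq_or_lt with rfl | hx
    · rw [U_self]; ring
    · rw [U_swap, U_of_lt F u t hx, add_comm y x]
  have hc : ContinuousOn (fun x => U F u t x y) (Icc y t) :=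
    (((c1.mul continuousOn_const).add ((continuousOn_const.sub c1).mul c2)).mono hsub).congr hU
  obtain ⟨a, ha, hmax⟩ := isCompact_Icc.exists_isMaxOn ⟨t, right_mem_Icc.2 h.le⟩ hc
  have hat : U F u t t y ≤ U F u t a y := hmax (right_mem_Icc.2 h.le)
  refine ⟨a, hsub ha, fun z hz => ?_⟩
  by_cases h1 : t < z
  · exact (U_lt_of_overshoot hF hu ht hz hy (Or.inr ⟨h, h1⟩)).le.trans hat
  by_cases h2 : y ≤ z
  · exact hmax ⟨h2, not_lt.1 h1⟩
  · linarith [U_le_of_past hF hu ht hz hy (Or.inr ⟨(not_le.1 h2).le, h.le⟩),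
      U_ideal hF hu ht hy h.ne']

/-! ### Comparative statics of best responses -/

lemma brL_mono {F : ℝ → ℝ} {u : ℝ → ℝ → ℝ} (hF : Fhyp F) (hu : uhyp u) (hS : SSCP F u)
    {t w w' a a' : ℝ} (ht : t ∈ T) (hw : w ∈ T) (hw' : w' ∈ T) (htw : t < w) (hww : w < w')
    (ha : a ∈ brL F u t w) (ha' : a' ∈ brL F u t w') : a ≤ a' := by
  by_contra! hc
  exact ((hS t a' a w w' 1 ht ha'.1 ha.1 hw hw' ⟨zero_le_one, le_rfl⟩
    (br_gt hF hu ht hw' (htw.trans hww) ha').1 hc (br_gt hF hu ht hw htw ha).2 hww hw'.2).1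
    (ha.2 _ ha'.1)).not_ge (ha'.2 _ ha.1)

lemma brR_mono {F : ℝ → ℝ} {u : ℝ → ℝ → ℝ} (hF : Fhyp F) (hu : uhyp u) (hS : SSCP F u)
    {t w w' b b' : ℝ} (ht : t ∈ T) (hw : w ∈ T) (hw' : w' ∈ T) (hww : w < w') (hwt : w' < t)
    (hb : b ∈ brR F u t w) (hb' : b' ∈ brR F u t w') : b ≤ b' := by
  by_contra! hc
  have h1 := br_lt hF hu ht hw (hww.trans hwt) (brR_eq F u t w ▸ hb)
  have h2 := br_lt hF hu ht hw' hwt (brR_eq F u t w' ▸ hb')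
  exact ((hS 0 w w' b' b t ⟨le_rfl, zero_le_one⟩ hw hw' hb'.1 hb.1 ht
    hw.1 hww h2.1 hc h1.2).2 (hb'.2 _ hb.1)).not_ge (hb.2 _ hb'.1)

/-- SLS for the left candidate: a weak preference for the more moderate platform becomes strict when
the ideal policy rises. -/
lemma sls_left {F : ℝ → ℝ} {u : ℝ → ℝ → ℝ} (hF : Fhyp F) (hu : uhyp u) (hL : SLS u)
    {t t' x x' y : ℝ} (ht : t ∈ T) (ht' : t' ∈ T) (hx : x ∈ T) (hx' : x' ∈ T) (hy : y ∈ T)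
    (h1 : t < t') (h2 : t' ≤ x) (h3 : x < x') (h4 : x' < y)
    (h : U F u t x y ≤ U F u t x' y) : U F u t' x y < U F u t' x' y := by
  have hs := hL t t' x x' y ht ht' hx hx' hy (Or.inl ⟨h1, h2, h3, h4⟩)
  rw [U_of_lt F u t (h3.trans h4), U_of_lt F u t h4] at h
  rw [U_of_lt F u t' (h3.trans h4), U_of_lt F u t' h4]
  have hA := sub_pos.2 (u_anti hu ht hx hy (h1.le.trans h2) (h3.trans h4))
  have hB := sub_pos.2 (u_anti hu ht' hx hy h2 (h3.trans h4))
  rw [gt_iff_lt, div_lt_div_iff₀ hA hB] at hs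
  have hF' := F_pos hF hx' hy h4.ne
  have k1 := mul_lt_mul_of_pos_left hs hF'
  have k2 : F ((x + y) / 2) * (u x t - u y t) ≤ F ((x' + y) / 2) * (u x' t - u y t) := by
    linarith
  have k3 := mul_le_mul_of_nonneg_right k2 hB.le
  have k4 : F ((x + y) / 2) * (u x t' - u y t') < F ((x' + y) / 2) * (u x' t' - u y t') :=
    lt_of_mul_lt_mul_left (a := u x t - u y t) (by linarith) hA.le
  linarith

/-- SLS for the right candidate: a weak preference for the more extreme platform becomes strict when
the ideal policy rises. -/
lemma sls_right {F : ℝ → ℝ} {u : ℝ → ℝ → ℝ} (hF : Fhyp F) (hu : uhyp u) (hL : SLS u)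
    {t t' x x' y : ℝ} (ht : t ∈ T) (ht' : t' ∈ T) (hx : x ∈ T) (hx' : x' ∈ T) (hy : y ∈ T)
    (h1 : y < x) (h2 : x < x') (h3 : x' ≤ t) (h4 : t < t')
    (h : U F u t y x ≤ U F u t y x') : U F u t' y x < U F u t' y x' := by
  have hs := hL t t' x x' y ht ht' hx hx' hy (Or.inr ⟨h1, h2, h3, h4⟩)
  rw [U_of_lt F u t h1, U_of_lt F u t (h1.trans h2)] at h
  rw [U_of_lt F u t' h1, U_of_lt F u t' (h1.trans h2)]
  have hA := sub_pos.2 (u_mono hu ht hy hx h1 (h2.le.trans h3))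
  have hB := sub_pos.2 (u_mono hu ht' hy hx h1 (h2.le.trans (h3.trans h4.le)))
  rw [gt_iff_lt, div_lt_div_iff₀ hA hB] at hs
  have hF' := sub_pos.2 (F_lt_one hF hy hx' (h1.trans h2).ne)
  have k1 := mul_lt_mul_of_pos_left hs hF'
  have k2 : (1 - F ((y + x) / 2)) * (u x t - u y t) ≤
      (1 - F ((y + x') / 2)) * (u x' t - u y t) := by linarith
  have k3 := mul_le_mul_of_nonneg_right k2 hB.le
  have k4 : (1 - F ((y + x) / 2)) * (u x t' - u y t') <
      (1 - F ((y + x') / 2)) * (u x' t' - u y t') :=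
    lt_of_mul_lt_mul_left (a := u x t - u y t) (by linarith) hA.le
  linarith

/-! ### A fixed point below a given platform -/

/-- Tarski: a monotone map on `[s, p]` whose values are at least `s`, with `h p ≤ p`, has a fixed
point. -/
lemma exists_fixed {h : ℝ → ℝ} {s p : ℝ} (hsp : s ≤ p)
    (hm : ∀ a b, s ≤ a → a ≤ b → b ≤ p → h a ≤ h b) (hs : ∀ a, s ≤ a → a ≤ p → s ≤ h a)
    (hp : h p ≤ p) : ∃ a, s ≤ a ∧ a ≤ p ∧ h a = a := by
  set S : Set ℝ := {a | s ≤ a ∧ a ≤ p ∧ h a ≤ a} with hS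
  have hpS : p ∈ S := ⟨hsp, le_rfl, hp⟩
  have hbd : BddBelow S := ⟨s, fun a ha => ha.1⟩
  have h1 : s ≤ sInf S := le_csInf ⟨p, hpS⟩ fun a ha => ha.1
  have h2 : sInf S ≤ p := csInf_le hbd hpS
  have h3 : h (sInf S) ≤ sInf S :=
    le_csInf ⟨p, hpS⟩ fun a ha => (hm _ _ h1 (csInf_le hbd ha) ha.2.1).trans ha.2.2
  refine ⟨sInf S, h1, h2, h3.antisymm (csInf_le hbd ⟨hs _ h1 h2, h3.trans h2, ?_⟩)⟩
  exact hm _ _ (hs _ h1 h2) h3 h2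

/-- If best-response selections `gl`, `gr` satisfy `gl (gr p) ≤ p`, some equilibrium lies below
`(p, gr p)`. -/
lemma exists_eq_below {F : ℝ → ℝ} {u : ℝ → ℝ → ℝ} (hF : Fhyp F) (hu : uhyp u) (hS : SSCP F u)
    {s t p : ℝ} (hs : s ∈ T) (ht : t ∈ T) (hsp : s ≤ p) (hpt : p < t)
    {gl gr : ℝ → ℝ} (hgl : ∀ w ∈ T, s < w → gl w ∈ brL F u s w)
    (hgr : ∀ a ∈ T, a < t → gr a ∈ brR F u t a) (hp : gl (gr p) ≤ p) :
    ∃ e ∈ E F u s t, e.1 ≤ p ∧ e.2 ≤ gr p := by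
  have hT : ∀ a, s ≤ a → a ≤ p → a ∈ T := fun a h1 h2 =>
    ⟨hs.1.trans h1, h2.trans (hpt.le.trans ht.2)⟩
  have hr : ∀ a, s ≤ a → a ≤ p → gr a ∈ T ∧ a < gr a := fun a h1 h2 => by
    have := hgr a (hT a h1 h2) (h2.trans_lt hpt)
    rw [brR_eq] at this
    exact ⟨this.1, (br_lt hF hu ht (hT a h1 h2) (h2.trans_lt hpt) this).1⟩
  have hrm : ∀ a b, s ≤ a → a ≤ b → b ≤ p → gr a ≤ gr b := fun a b h1 h2 h3 => by
    rcases h2.eq_or_lt with rfl | h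
    · exact le_rfl
    · have haT := hT a h1 (h2.trans h3)
      have hbT := hT b (h1.trans h2) h3
      exact brR_mono hF hu hS ht haT hbT h (h3.trans_lt hpt)
        (hgr a haT (h.trans (h3.trans_lt hpt))) (hgr b hbT (h3.trans_lt hpt))
  obtain ⟨a, h1, h2, h3⟩ := exists_fixed (h := fun a => gl (gr a)) hsp
    (fun a b h1 h2 h3 => by
      rcases (hrm a b h1 h2 h3).eq_or_lt with h | h
      · simp only [h, le_refl]
      · have ra := hr a h1 (h2.trans h3)
        have rb := hr b (h1.trans h2) h3
        exact brL_mono hF hu hS hs ra.1 rb.1 (h1.trans_lt ra.2) h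
          (hgl _ ra.1 (h1.trans_lt ra.2)) (hgl _ rb.1 ((h1.trans h2).trans_lt rb.2)))
    (fun a h1 h2 => by
      have ra := hr a h1 h2
      exact (br_gt hF hu hs ra.1 (h1.trans_lt ra.2) (hgl _ ra.1 (h1.trans_lt ra.2))).1) hp
  have ra := hr a h1 h2
  have hl := hgl _ ra.1 (h1.trans_lt ra.2)
  rw [h3] at hl
  exact ⟨(a, gr a), ⟨hl, hgr a (hT a h1 h2) (h2.trans_lt hpt)⟩, h2, hrm a p h1 h2 le_rfl⟩

/-- A best-response selection can be prescribed at one point. -/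
lemma exists_sel {D : ℝ → Prop} {B : ℝ → Set ℝ} (h : ∀ w, D w → ∃ a, a ∈ B w) {w₀ a₀ : ℝ}
    (h₀ : a₀ ∈ B w₀) : ∃ g : ℝ → ℝ, (∀ w, D w → g w ∈ B w) ∧ g w₀ = a₀ := by
  choose! g hg using h
  refine ⟨Function.update g w₀ a₀, fun w hw => ?_, by simp⟩
  by_cases hw₀ : w = w₀
  · subst hw₀; simpa using h₀
  · simpa [hw₀] using hg w hw

/-- Lowering the left ideal policy: every equilibrium for `(s', t)` dominates one for `(s, t)`. -/
lemma left_below {F : ℝ → ℝ} {u : ℝ → ℝ → ℝ} (hF : Fhyp F) (hu : uhyp u) (hS : SSCP F u)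
    (hL : SLS u) {s s' t : ℝ} (hs : s ∈ T) (hs' : s' ∈ T) (ht : t ∈ T) (h1 : s < s')
    (h2 : s' < t) {y : ℝ × ℝ} (hy : y ∈ E F u s' t) : ∃ e ∈ E F u s t, e ≤ y := by
  obtain ⟨o1, o2, o3⟩ := E_order hF hu hs' ht h2 hy
  have hyl := hy.1
  have hyr := hy.2
  have hl : ∀ w, (w ∈ T ∧ s < w) → ∃ a, a ∈ brL F u s w := fun w hw =>
    br_nonempty_gt hF hu hs hw.1 hw.2
  have hr : ∀ w, (w ∈ T ∧ w < t) → ∃ a, a ∈ brR F u t w := fun w hw => by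
    rw [brR_eq]; exact br_nonempty_lt hF hu ht hw.1 hw.2
  choose! gl hgl using hl
  obtain ⟨gr, hgr, hgr₀⟩ := exists_sel hr hyr
  have hsy : s < y.2 := by linarith
  have hg := hgl y.2 ⟨hyr.1, hsy⟩
  have hp : gl (gr y.1) ≤ y.1 := by
    rw [hgr₀]
    by_contra! hc
    exact (sls_left hF hu hL hs hs' hyl.1 hg.1 hyr.1 h1 o1 hc
      (br_gt hF hu hs hyr.1 hsy hg).2 (hg.2 _ hyl.1)).not_ge (hyl.2 _ hg.1)
  obtain ⟨e, he, e1, e2⟩ := exists_eq_below hF hu hS hs ht (h1.le.trans o1) (by linarith)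
    (fun w hw hw' => hgl w ⟨hw, hw'⟩) (fun w hw hw' => hgr w ⟨hw, hw'⟩) hp
  exact ⟨e, he, e1, hgr₀ ▸ e2⟩

/-- Lowering the right ideal policy: an equilibrium for `(s, t')` dominates one for `(s, t)`, provided
its left platform is below `t`, as it must be for the fixed point argument to apply. -/
lemma right_below {F : ℝ → ℝ} {u : ℝ → ℝ → ℝ} (hF : Fhyp F) (hu : uhyp u) (hS : SSCP F u)
    (hL : SLS u) {s t t' : ℝ} (hs : s ∈ T) (ht : t ∈ T) (ht' : t' ∈ T) (h1 : s < t)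
    (h2 : t < t') {z : ℝ × ℝ} (hz : z ∈ E F u s t') (hzt : z.1 < t) :
    ∃ e ∈ E F u s t, e ≤ z := by
  obtain ⟨o1, o2, o3⟩ := E_order hF hu hs ht' (h1.trans h2) hz
  have hzl := hz.1
  have hzr := hz.2
  have hl : ∀ w, (w ∈ T ∧ s < w) → ∃ a, a ∈ brL F u s w := fun w hw =>
    br_nonempty_gt hF hu hs hw.1 hw.2
  have hr : ∀ w, (w ∈ T ∧ w < t) → ∃ a, a ∈ brR F u t w := fun w hw => by
    rw [brR_eq]; exact br_nonempty_lt hF hu ht hw.1 hw.2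
  choose! gr hgr using hr
  obtain ⟨gl, hgl, hgl₀⟩ := exists_sel hl hzl
  have hg := hgr z.1 ⟨hzl.1, hzt⟩
  obtain ⟨q1, q2⟩ := br_lt hF hu ht hzl.1 hzt (brR_eq F u t z.1 ▸ hg)
  have hle : gr z.1 ≤ z.2 := by
    by_contra! hc
    exact (sls_right hF hu hL ht ht' hzr.1 hg.1 hzl.1 o2 hc q2 h2 (hg.2 _ hzr.1)).not_ge
      (hzr.2 _ hg.1)
  have hp : gl (gr z.1) ≤ z.1 := by
    rcases hle.eq_or_lt with h | h
    · rw [h, hgl₀]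
    · exact brL_mono hF hu hS hs hg.1 hzr.1 (o1.trans_lt q1) h
        (hgl _ ⟨hg.1, o1.trans_lt q1⟩) hzl
  obtain ⟨e, he, e1, e2⟩ := exists_eq_below hF hu hS hs ht o1 hzt
    (fun w hw hw' => hgl w ⟨hw, hw'⟩) (fun w hw hw' => hgr w ⟨hw, hw'⟩) hp
  exact ⟨e, he, e1, e2.trans hle⟩

/-! ### Expected policy -/

lemma pol_of_lt (F : ℝ → ℝ) {x y : ℝ} (h : x < y) :
    pol F x y = F ((x + y) / 2) * x + (1 - F ((x + y) / 2)) * y := by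
  simp [pol, P, h]

/-- If the left platform `a` is a best response to `b`, moderating it to `c` raises expected policy:
the preference of a concave utility for `a` over `c` carries over to `x ↦ -x`. -/
lemma pol_left {F : ℝ → ℝ} {u : ℝ → ℝ → ℝ} (hF : Fhyp F) (hu : uhyp u) {s a b c : ℝ}
    (hs : s ∈ T) (hb : b ∈ T) (hc : c ∈ T) (ha : a ∈ brL F u s b) (hsa : s ≤ a)
    (hac : a ≤ c) (hcb : c < b) : pol F a b ≤ pol F c b := by
  rcases hac.eq_or_lt with rfl | hac
  · exact le_rfl
  have h := ha.2 c hc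
  have hch := chord (hu.2.1 s hs) ha.1 hb hac hcb
  rw [U_of_lt F u s hcb, U_of_lt F u s (hac.trans hcb)] at h
  rw [pol_of_lt F hcb, pol_of_lt F (hac.trans hcb)]
  have hA := sub_pos.2 (u_anti hu hs ha.1 hb hsa (hac.trans hcb))
  have hab : 0 ≤ b - a := by linarith
  have k1 := mul_lt_mul_of_pos_left hch (F_pos hF hc hb hcb.ne)
  have k2 : F ((c + b) / 2) * (u c s - u b s) ≤ F ((a + b) / 2) * (u a s - u b s) := by linarith
  have k3 := mul_le_mul_of_nonneg_right k2 hab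
  have k4 : F ((c + b) / 2) * (b - c) ≤ F ((a + b) / 2) * (b - a) :=
    le_of_mul_le_mul_left (a := u a s - u b s) (by linarith) hA
  linarith

/-- Mirror image of `pol_left`: if the right platform `d` is a best response to `c`, it yields a
higher expected policy than any more moderate platform `b`. -/
lemma pol_right {F : ℝ → ℝ} {u : ℝ → ℝ → ℝ} (hF : Fhyp F) (hu : uhyp u) {t b c d : ℝ}
    (ht : t ∈ T) (hb : b ∈ T) (hc : c ∈ T) (hd : d ∈ brR F u t c) (hdt : d ≤ t)
    (hcb : c < b) (hbd : b ≤ d) : pol F c b ≤ pol F c d := by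
  rcases hbd.eq_or_lt with rfl | hbd
  · exact le_rfl
  have h := hd.2 b hb
  have hch := chord (hu.2.1 t ht) hc hd.1 hcb hbd
  rw [U_of_lt F u t hcb, U_of_lt F u t (hcb.trans hbd)] at h
  rw [pol_of_lt F hcb, pol_of_lt F (hcb.trans hbd)]
  have hA := sub_pos.2 (u_mono hu ht hc hd.1 (hcb.trans hbd) hdt)
  have hab : 0 ≤ d - c := by linarith
  have k1 := mul_lt_mul_of_pos_left hch (sub_pos.2 (F_lt_one hF hc hb hcb.ne))
  have k2 : (1 - F ((c + b) / 2)) * (u b t - u c t) ≤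
      (1 - F ((c + d) / 2)) * (u d t - u c t) := by linarith
  have k3 := mul_le_mul_of_nonneg_right k2 hab
  have k4 : (1 - F ((c + b) / 2)) * (b - c) ≤ (1 - F ((c + d) / 2)) * (d - c) :=
    le_of_mul_le_mul_left (a := u d t - u c t) (by linarith) hA
  linarith

lemma pol_mono {F : ℝ → ℝ} {u : ℝ → ℝ → ℝ} (hF : Fhyp F) (hu : uhyp u) {s t s' t' : ℝ}
    (hs : s ∈ T) (ht : t ∈ T) (hs' : s' ∈ T) (ht' : t' ∈ T) (h : s < t) (h' : s' < t')
    {x y : ℝ × ℝ} (hx : x ∈ E F u s t) (hy : y ∈ E F u s' t') (hxy : x ≤ y) :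
    pol F x.1 x.2 ≤ pol F y.1 y.2 := by
  obtain ⟨o1, o2, -⟩ := E_order hF hu hs ht h hx
  obtain ⟨-, q2, q3⟩ := E_order hF hu hs' ht' h' hy
  by_cases hc : y.1 < x.2
  · exact (pol_left hF hu hs hx.2.1 hy.1.1 hx.1 o1 hxy.1 hc).trans
      (pol_right hF hu ht' hx.2.1 hy.1.1 hy.2 q3 hc hxy.2)
  · rw [pol_of_lt F o2, pol_of_lt F q2]
    nlinarith [F_pos hF hx.1.1 hx.2.1 o2.ne, F_lt_one hF hy.1.1 hy.2.1 q2.ne]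

/-- Under SSCP and SLS, the equilibrium indirect expected policy associated
with the least equilibrium is increasing in each candidate's ideal policy. -/
theorem indirect_expected_policy_monotone_least (F : ℝ → ℝ) (u : ℝ → ℝ → ℝ)
    (hF : Fhyp F) (hu : uhyp u) (hSSCP : SSCP F u) (hSLS : SLS u)
    (tl tl' tr tr' : ℝ)
    (htl : tl ∈ T) (htl' : tl' ∈ T) (htr : tr ∈ T) (htr' : tr' ∈ T)
    (h1 : tl < tl') (h2 : tl' < tr) (h3 : tr < tr')
    (xb yb zb : ℝ × ℝ)
    (hx : IsLeast (E F u tl tr) xb)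
    (hy : IsLeast (E F u tl' tr) yb)
    (hz : IsLeast (E F u tl tr') zb) :
    pol F yb.1 yb.2 ≥ pol F xb.1 xb.2 ∧ pol F zb.1 zb.2 ≥ pol F xb.1 xb.2 := by
  have hst := h1.trans h2
  refine ⟨pol_mono hF hu htl htr htl' htr hst h2 hx.1 hy.1 ?_,
    pol_mono hF hu htl htr htl htr' hst (hst.trans h3) hx.1 hz.1 ?_⟩
  · obtain ⟨e, he, hle⟩ := left_below hF hu hSSCP hSLS htl htl' htr h1 h2 hy.1
    exact (hx.2 he).trans hle
  · by_cases hc : zb.1 < tr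
    · obtain ⟨e, he, hle⟩ := right_below hF hu hSSCP hSLS htl htr htr' hst h3 hz.1 hc
      exact (hx.2 he).trans hle
    · -- Both platforms of `xb` lie below `tr`, and both platforms of `zb` above it.
      obtain ⟨-, o2, o3⟩ := E_order hF hu htl htr hst hx.1
      obtain ⟨-, q2, -⟩ := E_order hF hu htl htr' (hst.trans h3) hz.1
      constructor <;> linarith
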